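/- In the DaC model on the triangular lattice with colouring density r = 1/2, for every p ∈ [0,1] and every n ∈ ℕ, the probability of a black vertical crossing of the rhombus S_{n,n} equals exactly 1/2: ℙ_{p,1/2}(V^b_{n,n}) = 1/2. -/

import Mathlib

/-!
Common definitions for the Divide-and-Colour (DaC) model of
Bálint, Camia and Meester, "Sharp phase transition and critical
behaviour in 2D divide and colour models".

The model is built concretely: a single uniform random variable on `(0,1]`
is decomposed into countably many i.i.d. uniform random variables (via its
binary digits); one family of uniforms drives the Bernoulli(p) bond
percolation (the edge configuration), and an independent family of uniforms
attaches an independent Bernoulli(r) colour to each bond cluster (the colour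
of a cluster is determined by the uniform label of its canonical
representative, the vertex of minimal encoding).  The DaC measure
`ℙ_{p,r}` is the pushforward of Lebesgue measure on `(0,1]` under the map
producing the pair (edge configuration, colour configuration).
-/

open MeasureTheory ENNReal

namespace DaC

/-- Vertices of the lattice. -/
abbrev V : Type := ℤ × ℤ

/-- Square lattice adjacency: Euclidean distance `1`. -/
def SqAdj (u v : V) : Prop := (u.1 - v.1) ^ 2 + (u.2 - v.2) ^ 2 = 1

/-- `*`-adjacency (matching graph of the square lattice):
Euclidean distance `1` or `√2`. -/
def StarAdj (u v : V) : Prop :=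
  (u.1 - v.1) ^ 2 + (u.2 - v.2) ^ 2 = 1 ∨ (u.1 - v.1) ^ 2 + (u.2 - v.2) ^ 2 = 2

/-- Triangular lattice adjacency. -/
def TriAdj (u v : V) : Prop :=
  (u.1 - v.1, u.2 - v.2) ∈
    ({(1, 0), (-1, 0), (0, 1), (0, -1), (1, 1), (-1, -1)} : Set (ℤ × ℤ))

/-- Classical indicator of a proposition, as a boolean. -/
noncomputable def boolOf (P : Prop) : Bool := @decide P (Classical.propDecidable P)

/-- The `n`-th binary digit of a real number `x ∈ (0,1]`. -/
noncomputable def bit (n : ℕ) (x : ℝ) : Bool := boolOf (⌊x * 2 ^ (n + 1)⌋ % 2 = 1)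

/-- A countable family of i.i.d. uniform random variables on `[0,1]`, extracted
from a single uniform sample `x` by splitting its binary digits. -/
noncomputable def unif (i : ℕ) (x : ℝ) : ℝ :=
  ∑' k : ℕ, if bit (Nat.pair i k) x then ((2 : ℝ)⁻¹) ^ (k + 1) else 0

/-- A symmetric encoding of (unordered) pairs of vertices. -/
noncomputable def eIdx (u v : V) : ℕ :=
  min (Encodable.encode (u, v)) (Encodable.encode (v, u))

/-- The uniform label attached to the edge `{u,v}`. -/
noncomputable def edgeU (u v : V) (x : ℝ) : ℝ := unif (2 * eIdx u v) x

/-- The uniform label attached to the vertex `v` (independent of the edge labels). -/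
noncomputable def vtxU (v : V) (x : ℝ) : ℝ := unif (2 * Encodable.encode v + 1) x

/-- Edge configurations: a boolean (open/closed) for each (ordered) pair of
vertices; configurations arising from the model are symmetric and are
supported on pairs of adjacent vertices. -/
abbrev EdgeCfg : Type := V → V → Bool

/-- Colour configurations: a colour (black = `true`, white = `false`) for each vertex. -/
abbrev ColourCfg : Type := V → Bool

/-- Full configurations of the DaC model: an edge configuration together with
a colour configuration. -/
abbrev Config : Type := EdgeCfg × ColourCfg

/-- The Bernoulli(p) edge configuration determined by the uniform sample `x`,
on the lattice with adjacency `adj`: an edge `{u,v}` of the lattice is open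
iff its uniform label is `< p`. -/
noncomputable def edgeCfg (adj : V → V → Prop) (p : ℝ) (x : ℝ) : EdgeCfg :=
  fun u v => boolOf (adj u v) && boolOf (edgeU u v x < p)

/-- Connectivity through open edges of the edge configuration `η`. -/
def Conn (η : EdgeCfg) (u v : V) : Prop :=
  Relation.ReflTransGen (fun a b => η a b = true) u v

/-- The `p`-cluster of the vertex `v`: its connected component in the graph
retaining only open edges. -/
def pCluster (η : EdgeCfg) (v : V) : Set V := {w | Conn η v w}

/-- Canonical representative of the `p`-cluster of `v`: the vertex of the
cluster with minimal encoding. -/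
noncomputable def clusterRep (η : EdgeCfg) (v : V) : V :=
  (Encodable.decode (α := V) (sInf (Encodable.encode '' pCluster η v))).getD v

/-- The colour configuration with parameters `p, r` determined by the uniform
sample `x`: every `p`-cluster is coloured black (with probability `r`)
or white, independently of all other `p`-clusters, according to the uniform
label of its canonical representative. -/
noncomputable def colourCfg (adj : V → V → Prop) (p r : ℝ) (x : ℝ) : ColourCfg :=
  fun v => boolOf (vtxU (clusterRep (edgeCfg adj p x) v) x < r)

/-- The uniform sample: Lebesgue measure on `(0,1]`. -/
noncomputable def base : Measure ℝ := volume.restrict (Set.Ioc 0 1)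

/-- `ν_p`: the product Bernoulli(p) measure on edge configurations of the
lattice with adjacency `adj`. -/
noncomputable def edgeMeasure (adj : V → V → Prop) (p : ℝ) : Measure EdgeCfg :=
  base.map (edgeCfg adj p)

/-- `ℙ_{p,r}`: the DaC measure on pairs (edge configuration, colour
configuration) for the lattice with adjacency `adj`. -/
noncomputable def DaCMeasure (adj : V → V → Prop) (p r : ℝ) : Measure Config :=
  base.map (fun x => (edgeCfg adj p x, colourCfg adj p r x))

/-- Monochromatic connectivity: `u` and `v` are joined by a path (for the
adjacency `adj`) all of whose vertices have colour `c`. -/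
def MonoConn (adj : V → V → Prop) (ξ : ColourCfg) (c : Bool) (u v : V) : Prop :=
  Relation.ReflTransGen (fun a b => adj a b ∧ ξ a = c ∧ ξ b = c) u v

/-- The colour-`c` cluster of `v` (for the adjacency `adj`): empty if `v` does
not have colour `c`, and otherwise the maximal `adj`-connected set of
`c`-coloured vertices containing `v`. -/
def monoCluster (adj : V → V → Prop) (ξ : ColourCfg) (c : Bool) (v : V) : Set V :=
  {w | ξ v = c ∧ MonoConn adj ξ c v w}

/-- The origin. -/
def origin : V := (0, 0)

/-- The size (cardinality) of a set of vertices, with values in `ℝ≥0∞`. -/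
noncomputable def sizeE (S : Set V) : ℝ≥0∞ := S.encard

/-- The probability, under the DaC measure with edge adjacency `eadj` and
parameters `p, r`, that the origin lies in an infinite colour-`c` cluster for
the adjacency `cadj`. -/
noncomputable def percProb (eadj cadj : V → V → Prop) (c : Bool) (p r : ℝ) : ℝ≥0∞ :=
  DaCMeasure eadj p r {ω | (monoCluster cadj ω.2 c origin).Infinite}

/-- `Θ(p,r)` for the square lattice: probability that the origin lies in an
infinite black `r`-cluster. -/
noncomputable def thetaSq (p r : ℝ) : ℝ≥0∞ := percProb SqAdj SqAdj true p r

/-- `Θ*(p,s)` for the square lattice: the `ℙ_{p,1-s}`-probability that the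
origin lies in an infinite white `*`-cluster. -/
noncomputable def thetaStarSq (p s : ℝ) : ℝ≥0∞ := percProb SqAdj StarAdj false p (1 - s)

/-- `Θ(p,r)` for the triangular lattice. -/
noncomputable def thetaTri (p r : ℝ) : ℝ≥0∞ := percProb TriAdj TriAdj true p r

/-- The critical colouring density `r_c(p)` of the square lattice DaC model. -/
noncomputable def rcSq (p : ℝ) : ℝ :=
  sSup {r : ℝ | r ∈ Set.Icc (0 : ℝ) 1 ∧ thetaSq p r = 0}

/-- The critical colouring density `r_c*(p)` for white `*`-percolation. -/
noncomputable def rcStarSq (p : ℝ) : ℝ :=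
  sSup {s : ℝ | s ∈ Set.Icc (0 : ℝ) 1 ∧ thetaStarSq p s = 0}

/-- The critical colouring density `r_c(p)` of the triangular lattice DaC model. -/
noncomputable def rcTri (p : ℝ) : ℝ :=
  sSup {r : ℝ | r ∈ Set.Icc (0 : ℝ) 1 ∧ thetaTri p r = 0}

/-! ### Rectangles and crossings -/

/-- The rectangle `S_{n,m} = ([0,n] × [0,m]) ∩ ℤ²`. -/
def Rect (n m : ℕ) : Set V :=
  {v | 0 ≤ v.1 ∧ v.1 ≤ (n : ℤ) ∧ 0 ≤ v.2 ∧ v.2 ≤ (m : ℤ)}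

/-- The top side of `S_{n,m}`. -/
def TopSide (n m : ℕ) : Set V := {v | v ∈ Rect n m ∧ v.2 = (m : ℤ)}

/-- The bottom side of `S_{n,m}`. -/
def BotSide (n m : ℕ) : Set V := {v | v ∈ Rect n m ∧ v.2 = 0}

/-- The left side of `S_{n,m}`. -/
def LeftSide (n m : ℕ) : Set V := {v | v ∈ Rect n m ∧ v.1 = 0}

/-- The right side of `S_{n,m}`. -/
def RightSide (n m : ℕ) : Set V := {v | v ∈ Rect n m ∧ v.1 = (n : ℤ)}

/-- There is a path (for the adjacency `adj`), all of whose vertices lie in the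
region `R` and satisfy the predicate `good`, from the set `A` to the set `B`. -/
def HasCrossing (adj : V → V → Prop) (good : V → Prop) (R A B : Set V) : Prop :=
  ∃ (k : ℕ) (f : Fin (k + 1) → V),
    (∀ i, f i ∈ R ∧ good (f i)) ∧
    (∀ i : Fin k, adj (f i.castSucc) (f i.succ)) ∧
    f 0 ∈ A ∧ f (Fin.last k) ∈ B

/-- `V^b_{n,m}` as a set of colour configurations: there is a black vertical
crossing of `S_{n,m}` (for the adjacency `adj`). -/
def VertBC (adj : V → V → Prop) (n m : ℕ) : Set ColourCfg :=
  {ξ | HasCrossing adj (fun v => ξ v = true) (Rect n m) (TopSide n m) (BotSide n m)}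

/-- `V^{w*}_{n,m}` as a set of colour configurations: there is a white vertical
`*`-crossing of `S_{n,m}`. -/
def VertWStarC (n m : ℕ) : Set ColourCfg :=
  {ξ | HasCrossing StarAdj (fun v => ξ v = false) (Rect n m) (TopSide n m) (BotSide n m)}

/-- `H^{w*}_{n,m}` as a set of colour configurations: there is a white
horizontal `*`-crossing of `S_{n,m}`. -/
def HorizWStarC (n m : ℕ) : Set ColourCfg :=
  {ξ | HasCrossing StarAdj (fun v => ξ v = false) (Rect n m) (LeftSide n m) (RightSide n m)}

/-- The event (set of full configurations) determined by a set of colour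
configurations. -/
def colourEvent (C : Set ColourCfg) : Set Config := {ω | ω.2 ∈ C}

/-! ### Events depending on colours, increasing events, pivotal clusters -/

/-- The event `A` is defined in terms of the colours of the vertices in `W`. -/
def DependsOnColoursIn (A : Set Config) (W : Set V) : Prop :=
  ∀ ω ω' : Config, (∀ v ∈ W, ω.2 v = ω'.2 v) → (ω ∈ A ↔ ω' ∈ A)

/-- The event `A` is increasing (for the partial order comparing colour
configurations pointwise, black = `true` above white = `false`). -/
def IncreasingColourEvent (A : Set Config) : Prop :=
  ∀ ω ω' : Config, (∀ v : V, ω.2 v = true → ω'.2 v = true) → ω ∈ A → ω' ∈ A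

/-- Flip the colours of the vertices of `C`. -/
noncomputable def flipOn (C : Set V) (ξ : ColourCfg) : ColourCfg :=
  fun v => @ite _ (v ∈ C) (Classical.propDecidable _) (!ξ v) (ξ v)

/-- The set `C` is a pivotal `p`-cluster for the event `A` in the
configuration `ω`: `C` is a `p`-cluster of the edge configuration of `ω`, and
flipping the colour of (all the vertices of) `C` changes whether the
configuration belongs to `A`. -/
def IsPivotal (A : Set Config) (ω : Config) (C : Set V) : Prop :=
  (∃ v : V, C = pCluster ω.1 v) ∧ ¬ (ω ∈ A ↔ (ω.1, flipOn C ω.2) ∈ A)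

/-- `n(A)`: the number of pivotal `p`-clusters for the event `A`, with values
in `ℝ≥0∞`. -/
noncomputable def numPivotal (A : Set Config) (ω : Config) : ℝ≥0∞ :=
  {C : Set V | IsPivotal A ω C}.encard

/-! ### Barriers -/

/-- Connectivity in the square lattice avoiding the edges of `E`. -/
def AvoidConn (E : Set (V × V)) (u v : V) : Prop :=
  Relation.ReflTransGen (fun a b => SqAdj a b ∧ (a, b) ∉ E ∧ (b, a) ∉ E) u v

/-- `E` is a barrier: a set of edges of the square lattice whose removal
(keeping the end-vertices) separates `ℤ²` into two or more connected
components, exactly one of which is infinite. -/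
def IsBarrier (E : Set (V × V)) : Prop :=
  (∀ e ∈ E, SqAdj e.1 e.2) ∧
  (∃ v, {w | AvoidConn E v w}.Infinite) ∧
  (∀ v w, {x | AvoidConn E v x}.Infinite → {x | AvoidConn E w x}.Infinite → AvoidConn E v w) ∧
  (∃ v, {w | AvoidConn E v w}.Finite)

/-- The exterior of a barrier: its unique infinite complementary component. -/
def barrierExt (E : Set (V × V)) : Set V := {v | {w | AvoidConn E v w}.Infinite}

/-- The interior of a barrier: the union of the finite complementary components. -/
def barrierInt (E : Set (V × V)) : Set V := {v | {w | AvoidConn E v w}.Finite}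

/-- The event `A ⊆ EdgeCfg` is increasing (opening edges preserves it). -/
def IncreasingEdgeEvent (A : Set EdgeCfg) : Prop :=
  ∀ η η' : EdgeCfg, (∀ a b : V, η a b = true → η' a b = true) → η ∈ A → η' ∈ A

/-- The event `A ⊆ EdgeCfg` depends only on the states of the edges both of
whose endpoints lie in `W`. -/
def DependsOnEdgesIn (A : Set EdgeCfg) (W : Set V) : Prop :=
  ∀ η η' : EdgeCfg, (∀ a b : V, a ∈ W → b ∈ W → η a b = η' a b) → (η ∈ A ↔ η' ∈ A)

/-! ### Translations -/

/-- Translation of configurations by the vector `u`. -/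
def shift (u : V) (ω : Config) : Config :=
  (fun a b => ω.1 (a + u) (b + u), fun a => ω.2 (a + u))

end DaC
namespace DaC

/-!
Colour flip composed with the reflection `x ↔ y` preserves the law of the colouring at `r = 1/2`:
the clusters of the reflected edge configuration are the reflected clusters, the law of the
colouring given the edges depends only on the partition into clusters, and a fair coin is symmetric.
The independence this needs is built into the binary digits of a uniform number, which are i.i.d.
because the doubling map shifts them and preserves the uniform law independently of the first digit.

On the other hand the same map exchanges `V^b_{n,n}` with its complement: by the Hex theorem there
is a black top-bottom crossing iff there is no white left-right crossing. Filling in black vertices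
below the rectangle and white ones to its right turns Hex into the game of Y, in which exactly one
of the two players wins: Schensted's majority rule reduces a board of side `N + 1` to one of side
`N` without changing the winner, and a board of side `0` is a single vertex.
-/

/-! ### Independence of the binary digits -/

section Bits

variable {Ω α : Type*} [MeasurableSpace Ω] [MeasurableSpace α]

theorem eq_infinitePi_of_initial {X : ℕ → Type*} [∀ k, MeasurableSpace (X k)]
    {μ : (k : ℕ) → Measure (X k)} [∀ k, IsProbabilityMeasure (μ k)] {ν : Measure (∀ k, X k)}
    (h : ∀ (n : ℕ) (t : (k : ℕ) → Set (X k)), (∀ k, MeasurableSet (t k)) →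
      ν {x | ∀ k < n, x k ∈ t k} = ∏ k ∈ Finset.range n, μ k (t k)) :
    ν = Measure.infinitePi μ := by
  classical
  refine Measure.eq_infinitePi _ fun s t ht => ?_
  obtain ⟨n, hn⟩ := s.exists_nat_subset_range
  have hpi : (s : Set ℕ).pi t = {x | ∀ k < n, x k ∈ if k ∈ s then t k else Set.univ} := by
    ext x
    refine ⟨fun hx k _ => ?_, fun hx k hk => ?_⟩
    · split_ifs with hk
      exacts [hx k hk, trivial]
    · simpa [Finset.mem_coe.1 hk] using hx k (Finset.mem_range.1 (hn hk))
  rw [hpi, h n _ fun k => by split_ifs <;> simp [ht], ← Finset.prod_subset hn]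
  · exact Finset.prod_congr rfl fun k hk => by rw [if_pos hk]
  · intro k _ hk
    rw [if_neg hk, measure_univ]

theorem map_iterate_eq_infinitePi {P : Measure Ω} [IsProbabilityMeasure P] {T : Ω → Ω} {X : Ω → α}
    (hT : Measurable T) (hX : Measurable X)
    (h : P.map (fun ω => (X ω, T ω)) = (P.map X).prod P) :
    P.map (fun ω k => X (T^[k] ω)) = Measure.infinitePi fun _ : ℕ => P.map X := by
  have : IsProbabilityMeasure (P.map X) := Measure.isProbabilityMeasure_map hX.aemeasurable
  have hXT : Measurable fun ω k => X (T^[k] ω) :=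
    measurable_pi_lambda _ fun k => hX.comp (hT.iterate k)
  refine eq_infinitePi_of_initial fun n => ?_
  have hmeas (n : ℕ) {t : ℕ → Set α} (ht : ∀ k, MeasurableSet (t k)) :
      MeasurableSet {x : ℕ → α | ∀ k < n, x k ∈ t k} := by
    simp only [Set.ofPred_forall]
    exact .iInter fun k => .iInter fun _ => measurable_pi_apply k (ht k)
  induction n with
  | zero => simp [Measure.map_apply hXT]
  | succ n ih =>
    intro t ht
    have hsplit : (fun ω k => X (T^[k] ω)) ⁻¹' {x | ∀ k < n + 1, x k ∈ t k} =
        (fun ω => (X ω, T ω)) ⁻¹'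
          (t 0 ×ˢ ((fun ω k => X (T^[k] ω)) ⁻¹' {x | ∀ k < n, x k ∈ t (k + 1)})) := by
      ext ω
      exact Nat.forall_lt_succ_left'
    have hrest := hXT (hmeas n fun k => ht (k + 1))
    rw [Measure.map_apply hXT (hmeas _ ht), hsplit,
      ← Measure.map_apply (hX.prodMk hT) ((ht 0).prod hrest), h, Measure.prod_prod,
      ← Measure.map_apply hXT (hmeas n fun k => ht (k + 1)), ih _ fun k => ht (k + 1),
      Finset.prod_range_succ', mul_comm]

theorem base_eq_restrict_Ico : base = volume.restrict (Set.Ico 0 1) :=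
  Measure.restrict_congr_set Ico_ae_eq_Ioc.symm

instance : IsProbabilityMeasure base :=
  ⟨by simp [base]⟩

@[simp]
theorem boolOf_eq_true {q : Prop} : boolOf q = true ↔ q :=
  @decide_eq_true_iff q (Classical.propDecidable q)

theorem measurable_boolOf {β : Type*} [MeasurableSpace β] {q : β → Prop}
    (hq : MeasurableSet {x | q x}) : Measurable fun x => boolOf (q x) := by
  refine measurable_to_bool ?_
  convert! hq
  exact Set.ext fun x => boolOf_eq_true

@[fun_prop]
theorem measurable_bit (k : ℕ) : Measurable (bit k) :=
  measurable_boolOf <| (Int.measurable_floor.comp (measurable_id.mul_const _))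
    (MeasurableSet.of_discrete (s := {i : ℤ | i % 2 = 1}))

/-- The doubling map `x ↦ 2x mod 1`, which shifts the binary digits. -/
noncomputable def doubling (x : ℝ) : ℝ := Int.fract (x * 2)

@[fun_prop]
theorem measurable_doubling : Measurable doubling :=
  measurable_fract.comp (measurable_id.mul_const 2)

theorem bit_succ (k : ℕ) (x : ℝ) : bit (k + 1) x = bit k (doubling x) := by
  have hfloor : ⌊x * 2 ^ (k + 1 + 1)⌋ = ⌊doubling x * 2 ^ (k + 1)⌋ + 2 * (⌊x * 2⌋ * 2 ^ k) := by
    rw [← Int.floor_add_intCast]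
    congr 1
    push_cast [doubling, Int.fract]
    ring
  rw [bit, bit, hfloor, Int.add_mul_emod_self_left]

theorem bit_eq_bit_zero_iterate (k : ℕ) (x : ℝ) : bit k x = bit 0 (doubling^[k] x) := by
  induction k generalizing x with
  | zero => rfl
  | succ k ih => rw [bit_succ, ih, Function.iterate_succ_apply]

theorem bit_zero_eq_and_mem_Ico_iff {b : Bool} {x : ℝ} :
    bit 0 x = b ∧ x ∈ Set.Ico 0 1 ↔ ⌊x * 2⌋ = b.toNat := by
  constructor
  · rintro ⟨rfl, hx0, hx1⟩
    have h0 : 0 ≤ ⌊x * 2⌋ := Int.floor_nonneg.2 (by linarith)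
    have h1 : ⌊x * 2⌋ < 2 := Int.floor_lt.2 (by push_cast; linarith)
    interval_cases h : ⌊x * 2⌋ <;> simp [bit, boolOf, h]
  · intro h
    obtain ⟨h0, h1⟩ := Int.floor_eq_iff.1 h
    refine ⟨by cases b <;> simp [bit, boolOf, h], ?_, ?_⟩
    · have : (0 : ℝ) ≤ (b.toNat : ℤ) := by positivity
      linarith
    · have : ((b.toNat : ℤ) : ℝ) ≤ 1 := by exact_mod_cast b.toNat_le
      linarith

theorem base_bit_zero_inter_doubling (b : Bool) {t : Set ℝ} (ht : MeasurableSet t) :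
    base (bit 0 ⁻¹' {b} ∩ doubling ⁻¹' t) = 2⁻¹ * base t := by
  have hbranch : bit 0 ⁻¹' {b} ∩ doubling ⁻¹' t ∩ Set.Ico 0 1 =
      (fun x : ℝ => x * 2) ⁻¹' ((fun y => y + -((b.toNat : ℤ) : ℝ)) ⁻¹' (t ∩ Set.Ico 0 1)) := by
    ext x
    have hIco : x * 2 + -((b.toNat : ℤ) : ℝ) ∈ Set.Ico 0 1 ↔ ⌊x * 2⌋ = b.toNat := by
      rw [Int.floor_eq_iff, Set.mem_Ico]
      constructor <;> rintro ⟨_, _⟩ <;> constructor <;> linarith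
    rw [Set.inter_right_comm]
    refine (and_congr_left' bit_zero_eq_and_mem_Ico_iff).trans ?_
    simp only [Set.mem_preimage, Set.mem_inter_iff]
    rw [hIco, and_comm (a := _ ∈ t)]
    refine and_congr_right fun h => ?_
    rw [doubling, Int.fract, h, sub_eq_add_neg]
  rw [base_eq_restrict_Ico, Measure.restrict_apply
      ((measurable_bit 0 (measurableSet_singleton b)).inter (measurable_doubling ht)),
    hbranch, Real.volume_preimage_mul_right two_ne_zero, measure_preimage_add_right,
    Measure.restrict_apply ht]
  rw [abs_of_pos (by norm_num), ENNReal.ofReal_inv_of_pos two_pos, ENNReal.ofReal_ofNat]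

theorem map_bit_zero_doubling :
    base.map (fun x => (bit 0 x, doubling x)) = (base.map (bit 0)).prod base := by
  have hbit := measurable_bit 0
  have hhalf (b : Bool) : base.map (bit 0) {b} = 2⁻¹ := by
    simpa [Measure.map_apply hbit] using base_bit_zero_inter_doubling b MeasurableSet.univ
  refine (Measure.prod_eq fun s t _ ht => ?_).symm
  rw [Measure.map_apply (hbit.prodMk measurable_doubling) (.prod .of_discrete ht)]
  have hslice : (base.restrict (doubling ⁻¹' t)).map (bit 0) = base t • base.map (bit 0) := by
    refine Measure.ext_of_singleton fun b => ?_
    rw [Measure.map_apply hbit .of_discrete, Measure.restrict_apply (hbit .of_discrete),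
      base_bit_zero_inter_doubling b ht, Measure.smul_apply, hhalf, smul_eq_mul, mul_comm]
  have := congrArg (fun μ => μ s) hslice
  rw [Measure.map_apply hbit .of_discrete, Measure.restrict_apply (hbit .of_discrete),
    Measure.smul_apply, smul_eq_mul, mul_comm] at this
  exact this

theorem map_bit_eq_infinitePi :
    base.map (fun x k => bit k x) = Measure.infinitePi fun _ : ℕ => base.map (bit 0) := by
  have hshift : (fun x k => bit k x) = fun x k => bit 0 (doubling^[k] x) :=
    funext₂ fun x k => bit_eq_bit_zero_iterate k x
  rw [hshift]
  exact map_iterate_eq_infinitePi measurable_doubling (measurable_bit 0) map_bit_zero_doubling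

/-- The number in `[0,1]` with binary digits `b 0, b 1, …` after the point. -/
noncomputable def binaryValue (b : ℕ → Bool) : ℝ :=
  ∑' k : ℕ, if b k then ((2 : ℝ)⁻¹) ^ (k + 1) else 0

@[fun_prop]
theorem measurable_binaryValue : Measurable binaryValue := by
  refine Measurable.tsum fun k => ?_
  exact Measurable.ite (measurableSet_eq_fun (measurable_pi_apply k) measurable_const)
    measurable_const measurable_const

theorem binaryValue_bit {x : ℝ} (hx : x ∈ Set.Ico 0 1) : binaryValue (fun k => bit k x) = x := by
  refine (tsum_congr fun k => ?_).trans (Real.hasSum_ofDigitsTerm_digits x one_lt_two hx).tsum_eq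
  have hdigit : bit k x = true ↔ ⌊x * 2 ^ (k + 1)⌋₊ % 2 = 1 := by
    rw [bit, boolOf_eq_true, ← Int.natCast_floor_eq_floor (by have := hx.1; positivity)]
    norm_cast
  rcases Nat.mod_two_eq_zero_or_one ⌊x * 2 ^ (k + 1)⌋₊ with h | h <;>
    simp [hdigit, Real.ofDigitsTerm, Real.digits, h]

theorem map_binaryValue :
    (Measure.infinitePi fun _ : ℕ => base.map (bit 0)).map binaryValue = base := by
  rw [← map_bit_eq_infinitePi, Measure.map_map measurable_binaryValue (by fun_prop)]
  nth_rw 2 [← Measure.map_id (μ := base)]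
  refine Measure.map_congr ?_
  rw [base_eq_restrict_Ico]
  filter_upwards [ae_restrict_mem measurableSet_Ico] with x hx using binaryValue_bit hx

@[fun_prop]
theorem measurable_unif (i : ℕ) : Measurable (unif i) :=
  measurable_binaryValue.comp
    (measurable_pi_lambda (fun x k => bit (Nat.pair i k) x) fun _ => measurable_bit _)

theorem map_unif_eq_infinitePi :
    base.map (fun x i => unif i x) = Measure.infinitePi fun _ : ℕ => base := by
  have : IsProbabilityMeasure (base.map (bit 0)) :=
    Measure.isProbabilityMeasure_map (measurable_bit 0).aemeasurable
  have hpair : Function.Injective fun ik : ℕ × ℕ => Nat.pair ik.1 ik.2 :=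
    Nat.pairEquiv.injective
  calc base.map (fun x i => unif i x)
      = (base.map fun x k => bit k x).map
          (fun b i => binaryValue fun k => b (Nat.pair i k)) := by
        rw [Measure.map_map (by fun_prop) (by fun_prop)]
        rfl
    _ = (((Measure.infinitePi fun _ : ℕ => base.map (bit 0)).map
          (fun b (ik : ℕ × ℕ) => b (Nat.pair ik.1 ik.2))).map
          (MeasurableEquiv.curry ℕ ℕ Bool)).map (fun b i => binaryValue (b i)) := by
        rw [map_bit_eq_infinitePi, Measure.map_map (by fun_prop) (by fun_prop),
          Measure.map_map (by fun_prop) (by fun_prop)]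
        rfl
    _ = Measure.infinitePi fun _ : ℕ => base := by
        rw [Measure.map_infinitePi_infinitePi_of_inj hpair,
          Measure.infinitePi_map_curry fun _ _ => base.map (bit 0),
          Measure.infinitePi_map_pi _ fun _ => measurable_binaryValue, map_binaryValue]

end Bits

/-! ### Maps between product measures -/

section ProductMeasures

variable {ι κ α β γ X : Type*} [MeasurableSpace α] [MeasurableSpace β] [MeasurableSpace γ]
  [MeasurableSpace X]

theorem measurable_pi_comp (s : ι → κ) : Measurable fun (ω : κ → X) a => ω (s a) :=
  measurable_pi_lambda _ fun a => measurable_pi_apply (s a)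

theorem comap_pi_comp_le (s : ι → κ) :
    MeasurableSpace.comap (fun (ω : κ → X) a => ω (s a)) inferInstance ≤
      ⨆ i ∈ Set.range s, MeasurableSpace.comap (fun ω : κ → X => ω i) inferInstance := by
  simp only [MeasurableSpace.pi, MeasurableSpace.comap_iSup, MeasurableSpace.comap_comp]
  exact iSup_le fun a => le_iSup₂_of_le (s a) ⟨a, rfl⟩ le_rfl

theorem infinitePi_map_prodMk_comp {κ₁ κ₂ : Type*} (μ : Measure X) [IsProbabilityMeasure μ]
    {f : κ₁ → ι} {g : κ₂ → ι} (hf : f.Injective) (hg : g.Injective) (hfg : ∀ a b, f a ≠ g b) :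
    (Measure.infinitePi fun _ : ι => μ).map (fun ω => (fun a => ω (f a), fun b => ω (g b))) =
      (Measure.infinitePi fun _ : κ₁ => μ).prod (Measure.infinitePi fun _ : κ₂ => μ) := by
  have hcoord : ProbabilityTheory.iIndep
      (fun i => MeasurableSpace.comap (fun ω : ι → X => ω i) inferInstance)
      (Measure.infinitePi fun _ : ι => μ) :=
    ProbabilityTheory.iIndepFun_infinitePi (X := fun _ x => x) fun _ => measurable_id
  have hdisj : Disjoint (Set.range f) (Set.range g) := by
    rw [Set.disjoint_left]
    rintro _ ⟨a, rfl⟩ ⟨b, hb⟩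
    exact hfg a b hb.symm
  have hindep : ProbabilityTheory.IndepFun (fun (ω : ι → X) a => ω (f a)) (fun ω b => ω (g b))
      (Measure.infinitePi fun _ : ι => μ) :=
    ProbabilityTheory.indep_of_indep_of_le_left
      (ProbabilityTheory.indep_of_indep_of_le_right
        (ProbabilityTheory.indep_iSup_of_disjoint
          (fun i => (measurable_pi_apply i).comap_le) hcoord hdisj)
        (comap_pi_comp_le g))
      (comap_pi_comp_le f)
  rw [hindep.map_prod_eq_prod_map_map (measurable_pi_comp f).aemeasurable
      (measurable_pi_comp g).aemeasurable,
    Measure.map_infinitePi_infinitePi_of_inj hf, Measure.map_infinitePi_infinitePi_of_inj hg]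

theorem infinitePi_map_comp_eq_map_comp_mk (μ : Measure X) [IsProbabilityMeasure μ] (s : ι → κ) :
    (Measure.infinitePi fun _ : κ => μ).map (fun ω a => ω (s a)) =
      (Measure.infinitePi fun _ : Quotient (Setoid.ker s) => μ).map
        (fun ω a => ω (Quotient.mk _ a)) := by
  rw [← Measure.map_infinitePi_infinitePi_of_inj (P := fun _ => μ) (Setoid.kerLift_injective s),
    Measure.map_map (by fun_prop) (by fun_prop)]
  rfl

theorem infinitePi_map_comp_congr_ker {κ₁ κ₂ : Type*} (μ : Measure X) [IsProbabilityMeasure μ]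
    {s₁ : ι → κ₁} {s₂ : ι → κ₂} (h : Setoid.ker s₁ = Setoid.ker s₂) :
    (Measure.infinitePi fun _ : κ₁ => μ).map (fun ω a => ω (s₁ a)) =
      (Measure.infinitePi fun _ : κ₂ => μ).map (fun ω a => ω (s₂ a)) := by
  rw [infinitePi_map_comp_eq_map_comp_mk μ s₁, infinitePi_map_comp_eq_map_comp_mk μ s₂, h]

theorem prod_map_congr_ae_fst {μ : Measure α} {ν : Measure β} [SFinite μ] [SFinite ν]
    {F G : α × β → γ} (hF : Measurable F) (hG : Measurable G)
    (h : ∀ᵐ a ∂μ, ν.map (fun b => F (a, b)) = ν.map (fun b => G (a, b))) :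
    (μ.prod ν).map F = (μ.prod ν).map G := by
  ext s hs
  rw [Measure.map_apply hF hs, Measure.map_apply hG hs, Measure.prod_apply (hF hs),
    Measure.prod_apply (hG hs)]
  refine lintegral_congr_ae ?_
  filter_upwards [h] with a ha
  have := congrArg (fun m => m s) ha
  rwa [Measure.map_apply (by fun_prop) hs, Measure.map_apply (by fun_prop) hs] at this

end ProductMeasures

/-! ### Clusters -/

section Paths

variable {α : Type*} {r : α → α → Prop}

theorem reflTransGen_iff_exists_fin {a b : α} :
    Relation.ReflTransGen r a b ↔ ∃ (k : ℕ) (f : Fin (k + 1) → α),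
      (∀ i : Fin k, r (f i.castSucc) (f i.succ)) ∧ f 0 = a ∧ f (Fin.last k) = b := by
  constructor
  · intro h
    induction h with
    | refl => exact ⟨0, fun _ => a, fun i => i.elim0, rfl, rfl⟩
    | @tail b c _ hbc ih =>
      obtain ⟨k, f, hf, h0, hlast⟩ := ih
      refine ⟨k + 1, Fin.snoc (α := fun _ => α) f c, ?_, ?_, Fin.snoc_last _ _⟩
      · refine Fin.lastCases ?_ fun i => ?_
        · rw [Fin.succ_last, Fin.snoc_last, Fin.snoc_castSucc, hlast]
          exact hbc
        · rw [Fin.succ_castSucc, Fin.snoc_castSucc, Fin.snoc_castSucc]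
          exact hf i
      · rw [← Fin.castSucc_zero, Fin.snoc_castSucc, h0]
  · rintro ⟨k, f, hf, rfl, rfl⟩
    exact Fin.induction .refl (fun i ih => ih.tail (hf i)) (Fin.last k)

end Paths

section Clusters

theorem clusterRep_isLeast (η : EdgeCfg) (v : V) :
    clusterRep η v ∈ pCluster η v ∧
      ∀ w ∈ pCluster η v, Encodable.encode (clusterRep η v) ≤ Encodable.encode w := by
  have hne : (Encodable.encode '' pCluster η v).Nonempty := ⟨_, v, .refl, rfl⟩
  obtain ⟨w, hw, hmin⟩ := Nat.sInf_mem hne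
  have hrep : clusterRep η v = w := by
    rw [clusterRep, ← hmin, Encodable.encodek, Option.getD_some]
  rw [hrep, hmin]
  exact ⟨hw, fun u hu => Nat.sInf_le ⟨u, hu, rfl⟩⟩

theorem clusterRep_eq_iff {η : EdgeCfg} {v w : V} :
    clusterRep η v = w ↔
      Conn η v w ∧ ∀ u, Conn η v u → Encodable.encode w ≤ Encodable.encode u := by
  have hleast := clusterRep_isLeast η v
  refine ⟨fun h => h ▸ hleast, fun ⟨hw, hmin⟩ => ?_⟩
  exact Encodable.encode_injective (le_antisymm (hleast.2 w hw) (hmin _ hleast.1))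

theorem conn_symm {η : EdgeCfg} (hη : ∀ u v, η u v = η v u) {u v : V} (h : Conn η u v) :
    Conn η v u :=
  have : Std.Symm fun a b => η a b = true := ⟨fun a b hab => hη a b ▸ hab⟩
  Std.Symm.symm (r := Relation.ReflTransGen fun a b => η a b = true) u v h

theorem clusterRep_eq_clusterRep_iff {η : EdgeCfg} (hη : ∀ u v, η u v = η v u) {u v : V} :
    clusterRep η u = clusterRep η v ↔ Conn η u v := by
  constructor
  · intro h
    exact (clusterRep_isLeast η u).1.trans (h ▸ conn_symm hη (clusterRep_isLeast η v).1)
  · intro h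
    rw [clusterRep_eq_iff]
    have hleast := clusterRep_isLeast η v
    exact ⟨h.trans hleast.1, fun w hw => hleast.2 w ((conn_symm hη h).trans hw)⟩

theorem conn_comp_equiv (η : EdgeCfg) (σ : Equiv.Perm V) {u v : V} :
    Conn (fun a b => η (σ a) (σ b)) u v ↔ Conn η (σ u) (σ v) := by
  refine ⟨Relation.ReflTransGen.lift (p := fun a b => η a b = true) σ (fun _ _ => id) u v,
    fun h => ?_⟩
  have := Relation.ReflTransGen.lift (p := fun a b => η (σ a) (σ b) = true) σ.symm
    (fun a b hab => by simpa [Function.onFun] using hab) _ _ h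
  simpa [Function.onFun, Conn] using this

theorem measurable_conn (u v : V) : Measurable fun η : EdgeCfg => Conn η u v := by
  simp only [Conn, reflTransGen_iff_exists_fin]
  fun_prop

@[fun_prop]
theorem measurable_clusterRep (v : V) : Measurable fun η => clusterRep η v := by
  refine measurable_to_countable' fun w => ?_
  have hpre : (fun η => clusterRep η v) ⁻¹' {w} =
      {η | Conn η v w ∧ ∀ u, Conn η v u → Encodable.encode w ≤ Encodable.encode u} :=
    Set.ext fun η => clusterRep_eq_iff
  rw [hpre, measurableSet_setOfPred]
  exact (measurable_conn v w).and (.forall fun u => (measurable_conn v u).imp measurable_const)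

end Clusters

/-! ### The law of the colouring -/

section ColourLaw

variable {adj : V → V → Prop} {p r : ℝ}

/-- The Bernoulli(`r`) law of the colour of a single cluster, realised as in `colourCfg`. -/
noncomputable def coin (r : ℝ) : Measure Bool := base.map fun t => boolOf (t < r)

theorem measurable_boolOf_lt (r : ℝ) : Measurable fun t : ℝ => boolOf (t < r) :=
  measurable_boolOf measurableSet_Iio

instance (r : ℝ) : IsProbabilityMeasure (coin r) :=
  Measure.isProbabilityMeasure_map (measurable_boolOf_lt r).aemeasurable

theorem infinitePi_coin (ι : Type*) (r : ℝ) :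
    Measure.infinitePi (fun _ : ι => coin r) =
      (Measure.infinitePi fun _ : ι => base).map (fun ω i => boolOf (ω i < r)) :=
  (Measure.infinitePi_map_pi _ fun _ => measurable_boolOf_lt r).symm

theorem base_map_one_sub : base.map (fun t => 1 - t) = base := by
  have hpre : (fun t : ℝ => 1 - t) ⁻¹' Set.Ioc 0 1 = Set.Ico 0 1 := by simp
  have := ((Measure.measurePreserving_sub_left volume (1 : ℝ)).restrict_preimage
    (measurableSet_Ioc (a := 0) (b := 1))).map_eq
  rwa [hpre, ← base_eq_restrict_Ico] at this

theorem coin_map_not (r : ℝ) : (coin r).map not = coin (1 - r) := by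
  rw [coin, coin, Measure.map_map (by fun_prop) (measurable_boolOf_lt r)]
  nth_rw 2 [← base_map_one_sub]
  rw [Measure.map_map (measurable_boolOf_lt _) (by fun_prop)]
  refine Measure.map_congr ?_
  filter_upwards [ae_restrict_of_ae (Measure.ae_ne volume r)] with t ht
  rw [Function.comp_apply, Function.comp_apply, Bool.eq_iff_iff, Bool.not_eq_true',
    ← Bool.not_eq_true, boolOf_eq_true, boolOf_eq_true, sub_lt_sub_iff_left, not_lt]
  exact (Ne.symm ht).le_iff_lt

/-- The edge configuration in which an edge of the lattice is open iff its label is `< p`. The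
labels may be different for the two orientations of an edge. -/
noncomputable def edgesOfLabels (adj : V → V → Prop) (p : ℝ) (ω : V × V → ℝ) : EdgeCfg :=
  fun u v => boolOf (adj u v) && boolOf (ω (u, v) < p)

@[fun_prop]
theorem measurable_edgesOfLabels : Measurable (edgesOfLabels adj p) := by
  refine measurable_pi_lambda _ fun u => measurable_pi_lambda _ fun v => ?_
  exact (measurable_from_top (f := fun b => boolOf (adj u v) && b)).comp
    ((measurable_boolOf_lt p).comp (measurable_pi_apply _))

/-- The colouring in which every cluster of `η` takes the colour that `c` gives to the code of its
representative. -/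
noncomputable def clusterColouring (η : EdgeCfg) (c : ℕ → Bool) : ColourCfg :=
  fun v => c (Encodable.encode (clusterRep η v))

theorem measurable_clusterColouring :
    Measurable fun ω : EdgeCfg × (ℕ → Bool) => clusterColouring ω.1 ω.2 := by
  refine measurable_pi_lambda _ fun v => ?_
  have heval : Measurable fun x : (ℕ → Bool) × V => x.1 (Encodable.encode x.2) :=
    measurable_from_prod_countable_left fun w => measurable_pi_apply (Encodable.encode w)
  exact heval.comp (measurable_snd.prodMk ((measurable_clusterRep v).comp measurable_fst))

theorem edgeMeasure_eq_map_edgesOfLabels :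
    edgeMeasure adj p = (Measure.infinitePi fun _ : ℕ => base).map
      (fun ω => edgesOfLabels adj p fun e => ω (eIdx e.1 e.2)) := by
  have heven : Function.Injective fun k : ℕ => 2 * k := mul_right_injective₀ two_ne_zero
  rw [← Measure.map_infinitePi_infinitePi_of_inj (P := fun _ => base) heven,
    ← map_unif_eq_infinitePi, Measure.map_map (measurable_pi_comp _) (by fun_prop),
    Measure.map_map (by fun_prop) (by fun_prop)]
  rfl

@[fun_prop]
theorem measurable_edgeCfg : Measurable (edgeCfg adj p) :=
  measurable_edgesOfLabels.comp <|
    measurable_pi_lambda (fun x (e : V × V) => unif (2 * eIdx e.1 e.2) x) fun _ => measurable_unif _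

theorem measurable_labelColour (r : ℝ) : Measurable fun x k => boolOf (unif (2 * k + 1) x < r) :=
  measurable_pi_lambda _ fun _ => (measurable_boolOf_lt r).comp (measurable_unif _)

theorem map_edgeCfg_labelColour :
    base.map (fun x => (edgeCfg adj p x, fun k => boolOf (unif (2 * k + 1) x < r))) =
      (edgeMeasure adj p).prod (Measure.infinitePi fun _ : ℕ => coin r) := by
  have hcolours : Measurable fun (ω : ℕ → ℝ) k => boolOf (ω k < r) :=
    measurable_pi_lambda _ fun k => (measurable_boolOf_lt r).comp (measurable_pi_apply k)
  have hedges : Measurable fun ω : ℕ → ℝ => edgesOfLabels adj p fun e => ω (eIdx e.1 e.2) := by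
    fun_prop
  have hsplit := infinitePi_map_prodMk_comp base (f := fun k : ℕ => 2 * k)
    (g := fun k : ℕ => 2 * k + 1) (mul_right_injective₀ two_ne_zero)
    (fun a b h => by simpa using h) (fun a b => by omega)
  rw [edgeMeasure_eq_map_edgesOfLabels, infinitePi_coin,
    Measure.map_prod_map _ _ hedges hcolours, ← hsplit, ← map_unif_eq_infinitePi,
    Measure.map_map (hedges.prodMap hcolours) (by fun_prop),
    Measure.map_map ((hedges.prodMap hcolours).comp (by fun_prop)) (by fun_prop)]
  rfl

theorem eIdx_eq_eIdx_iff {u v u' v' : V} : eIdx u v = eIdx u' v' ↔ s(u, v) = s(u', v') := by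
  rw [Sym2.eq_iff]
  constructor
  · intro h
    have hcode {a b c d : V} (h : Encodable.encode (a, b) = Encodable.encode (c, d)) :
        a = c ∧ b = d := Prod.mk.inj (Encodable.encode_injective h)
    unfold eIdx at h
    rcases min_choice (Encodable.encode (u, v)) (Encodable.encode (v, u)) with huv | huv <;>
      rcases min_choice (Encodable.encode (u', v')) (Encodable.encode (v', u')) with huv' | huv' <;>
      rw [huv, huv'] at h <;> have := hcode h <;> tauto
  · rintro (⟨rfl, rfl⟩ | ⟨rfl, rfl⟩)
    exacts [rfl, min_comm _ _]

theorem edgeMeasure_map_comp_equiv (σ : Equiv.Perm V) (hσ : ∀ u v, adj (σ u) (σ v) ↔ adj u v) :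
    (edgeMeasure adj p).map (fun η u v => η (σ u) (σ v)) = edgeMeasure adj p := by
  have hker : Setoid.ker (fun e : V × V => eIdx (σ e.1) (σ e.2)) =
      Setoid.ker (fun e : V × V => eIdx e.1 e.2) := by
    ext e e'
    simp only [Setoid.ker_def, eIdx_eq_eIdx_iff, Sym2.eq_iff, σ.apply_eq_iff_eq]
  have hinvariant (ω : V × V → ℝ) (u v : V) :
      edgesOfLabels adj p ω (σ u) (σ v) = edgesOfLabels adj p (fun e => ω (σ e.1, σ e.2)) u v := by
    simp only [edgesOfLabels, hσ]
  rw [edgeMeasure_eq_map_edgesOfLabels, Measure.map_map (by fun_prop) (by fun_prop)]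
  calc (Measure.infinitePi fun _ : ℕ => base).map _
      = ((Measure.infinitePi fun _ : ℕ => base).map
          (fun ω (e : V × V) => ω (eIdx (σ e.1) (σ e.2)))).map (edgesOfLabels adj p) := by
        rw [Measure.map_map (by fun_prop) (by fun_prop)]
        congr 1
        exact funext fun ω => funext₂ (hinvariant fun e => ω (eIdx e.1 e.2))
    _ = ((Measure.infinitePi fun _ : ℕ => base).map
          (fun ω (e : V × V) => ω (eIdx e.1 e.2))).map (edgesOfLabels adj p) := by
        rw [infinitePi_map_comp_congr_ker base hker]
    _ = _ := by
        rw [Measure.map_map (by fun_prop) (by fun_prop)]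
        rfl

/-- The law of the colouring in the DaC model: the second marginal of `DaCMeasure`. -/
noncomputable def colourMeasure (adj : V → V → Prop) (p r : ℝ) : Measure ColourCfg :=
  base.map (colourCfg adj p r)

theorem measurable_colourCfg : Measurable (colourCfg adj p r) :=
  measurable_clusterColouring.comp (measurable_edgeCfg.prodMk (measurable_labelColour r))

theorem colourMeasure_eq_map_clusterColouring :
    colourMeasure adj p r = ((edgeMeasure adj p).prod (Measure.infinitePi fun _ : ℕ => coin r)).map
      (fun ω => clusterColouring ω.1 ω.2) := by
  rw [← map_edgeCfg_labelColour,
    Measure.map_map measurable_clusterColouring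
      (measurable_edgeCfg.prodMk (measurable_labelColour r))]
  rfl

instance : IsProbabilityMeasure (edgeMeasure adj p) :=
  Measure.isProbabilityMeasure_map measurable_edgeCfg.aemeasurable

instance : IsProbabilityMeasure (colourMeasure adj p r) :=
  Measure.isProbabilityMeasure_map measurable_colourCfg.aemeasurable

theorem colourMeasure_map_not (adj : V → V → Prop) (p r : ℝ) :
    (colourMeasure adj p r).map (fun ξ v => !ξ v) = colourMeasure adj p (1 - r) := by
  have hnot {ι : Type} : Measurable fun (c : ι → Bool) i => !c i := by fun_prop
  have hflip : Measure.infinitePi (fun _ : ℕ => coin (1 - r)) =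
      (Measure.infinitePi fun _ : ℕ => coin r).map (fun c k => !c k) := by
    rw [← coin_map_not, ← Measure.infinitePi_map_pi _ fun _ => measurable_from_top]
  rw [colourMeasure_eq_map_clusterColouring, colourMeasure_eq_map_clusterColouring, hflip]
  nth_rw 2 [← Measure.map_id (μ := edgeMeasure adj p)]
  rw [Measure.map_prod_map _ _ measurable_id hnot, Measure.map_map hnot measurable_clusterColouring,
    Measure.map_map measurable_clusterColouring (measurable_id.prodMap hnot)]
  rfl

theorem ae_edgeMeasure_symm [Std.Symm adj] : ∀ᵐ η ∂edgeMeasure adj p, ∀ u v, η u v = η v u := by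
  have hmeas : MeasurableSet {η : EdgeCfg | ∀ u v, η u v = η v u} := by
    simp only [Set.ofPred_forall]
    exact .iInter fun u => .iInter fun v => measurableSet_eq_fun (by fun_prop) (by fun_prop)
  rw [edgeMeasure, ae_map_iff measurable_edgeCfg.aemeasurable hmeas]
  refine .of_forall fun x u v => ?_
  have hadj : adj u v ↔ adj v u := ⟨Std.Symm.symm u v, Std.Symm.symm v u⟩
  have hlabel : eIdx u v = eIdx v u := eIdx_eq_eIdx_iff.2 Sym2.eq_swap
  simp only [edgeCfg, edgeU, hadj, hlabel]

theorem colourMeasure_map_comp_equiv [Std.Symm adj] (σ : Equiv.Perm V)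
    (hσ : ∀ u v, adj (σ u) (σ v) ↔ adj u v) :
    (colourMeasure adj p r).map (fun ξ v => ξ (σ v)) = colourMeasure adj p r := by
  have hcolours := measurable_pi_comp (X := Bool) σ
  have hedges : Measurable fun (η : EdgeCfg) u v => η (σ u) (σ v) := by fun_prop
  have hpull := hedges.prodMap (measurable_id (α := ℕ → Bool))
  rw [colourMeasure_eq_map_clusterColouring, Measure.map_map hcolours measurable_clusterColouring]
  calc ((edgeMeasure adj p).prod (Measure.infinitePi fun _ : ℕ => coin r)).map _
      = ((edgeMeasure adj p).prod (Measure.infinitePi fun _ : ℕ => coin r)).map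
          ((fun ω => clusterColouring ω.1 ω.2) ∘
            Prod.map (fun η u v => η (σ u) (σ v)) id) := by
        refine prod_map_congr_ae_fst (hcolours.comp measurable_clusterColouring)
          (measurable_clusterColouring.comp hpull) ?_
        filter_upwards [ae_edgeMeasure_symm] with η hη
        -- Given the edges, the law of the colouring depends only on which vertices share a cluster.
        refine infinitePi_map_comp_congr_ker (coin r)
          (s₁ := fun v => Encodable.encode (clusterRep η (σ v)))
          (s₂ := fun v => Encodable.encode (clusterRep (fun u v => η (σ u) (σ v)) v)) ?_
        ext u v
        rw [Setoid.ker_def, Setoid.ker_def, Encodable.encode_inj, Encodable.encode_inj,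
          clusterRep_eq_clusterRep_iff hη, clusterRep_eq_clusterRep_iff fun u v => hη _ _,
          conn_comp_equiv]
    _ = _ := by
        rw [← Measure.map_map measurable_clusterColouring hpull,
          ← Measure.map_prod_map _ _ hedges measurable_id, Measure.map_id,
          edgeMeasure_map_comp_equiv σ hσ]

theorem DaCMeasure_colourEvent {C : Set ColourCfg} (hC : MeasurableSet C) :
    DaCMeasure adj p r (colourEvent C) = colourMeasure adj p r C := by
  have hpre : colourEvent C = Prod.snd ⁻¹' C := rfl
  rw [DaCMeasure, colourMeasure, hpre,
    Measure.map_apply (measurable_edgeCfg.prodMk measurable_colourCfg) (measurable_snd hC),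
    Measure.map_apply measurable_colourCfg hC]
  rfl

end ColourLaw

/-! ### Paths and crossings -/

section Linked

variable {α : Type*} {adj : α → α → Prop} {S T : Set α} {a b : α}

/-- `a` and `b` are joined by an `adj`-path all of whose steps have both ends in `S`; in particular
every `a` is linked to itself, whether or not it belongs to `S`. -/
def Linked (adj : α → α → Prop) (S : Set α) : α → α → Prop :=
  Relation.ReflTransGen fun u v => adj u v ∧ u ∈ S ∧ v ∈ S

namespace Linked

theorem of_adj (hab : adj a b) (ha : a ∈ S) (hb : b ∈ S) : Linked adj S a b :=
  .single ⟨hab, ha, hb⟩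

theorem trans {c : α} (hab : Linked adj S a b) (hbc : Linked adj S b c) : Linked adj S a c :=
  Relation.ReflTransGen.trans hab hbc

theorem symm [Std.Symm adj] (h : Linked adj S a b) : Linked adj S b a :=
  have : Std.Symm fun u v => adj u v ∧ u ∈ S ∧ v ∈ S :=
    ⟨fun u v ⟨huv, hu, hv⟩ => ⟨Std.Symm.symm u v huv, hv, hu⟩⟩
  Std.Symm.symm (r := Relation.ReflTransGen _) a b h

theorem mono (hST : S ⊆ T) (h : Linked adj S a b) : Linked adj T a b :=
  Relation.ReflTransGen.mono (fun _ _ ⟨huv, hu, hv⟩ => ⟨huv, hST hu, hST hv⟩) _ _ h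

theorem mem_right (h : Linked adj S a b) (ha : a ∈ S) : b ∈ S := by
  induction h with
  | refl => exact ha
  | tail _ hstep => exact hstep.2.2

theorem exists_exit {C D : Set α} (hexit : ∀ u ∈ C, ∀ v ∈ S \ C, adj u v → u ∈ D)
    (h : Linked adj S a b) (ha : a ∈ C) (hb : b ∉ C) : ∃ d ∈ D, Linked adj C a d := by
  suffices Linked adj C a b ∨ ∃ d ∈ D, Linked adj C a d from
    this.resolve_left fun hab => hb (hab.mem_right ha)
  clear hb
  induction h with
  | refl => exact .inl .refl
  | @tail u v _ hstep ih =>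
    obtain ⟨huv, -, hv⟩ := hstep
    refine ih.elim (fun hau => ?_) .inr
    have hu := hau.mem_right ha
    by_cases hvC : v ∈ C
    · exact .inl (hau.tail ⟨huv, hu, hvC⟩)
    · exact .inr ⟨u, hexit u hu v ⟨hv, hvC⟩ huv, hau⟩

theorem of_uIcc [Std.Symm adj] {f : ℤ → α} (hadj : ∀ i, adj (f i) (f (i + 1))) {x y : ℤ}
    (hmem : ∀ i ∈ Set.uIcc x y, f i ∈ S) : Linked adj S (f x) (f y) := by
  have hstep (i : ℤ) (hi : i ∈ Set.uIcc x y) (hi' : i + 1 ∈ Set.uIcc x y) :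
      adj (f i) (f (i + 1)) ∧ f i ∈ S ∧ f (i + 1) ∈ S := ⟨hadj i, hmem _ hi, hmem _ hi'⟩
  refine Relation.ReflTransGen.lift f (fun _ _ => id) _ _ (reflTransGen_of_succ
    (fun i j => adj (f i) (f j) ∧ f i ∈ S ∧ f j ∈ S) (fun i hi => ?_) fun i hi => ?_)
  · rw [Set.mem_Ico] at hi
    refine hstep i ?_ ?_ <;> rw [Set.mem_uIcc] <;> omega
  · rw [Set.mem_Ico] at hi
    obtain ⟨h, hl, hr⟩ := hstep i (by rw [Set.mem_uIcc]; omega) (by rw [Set.mem_uIcc]; omega)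
    exact ⟨Std.Symm.symm _ _ h, hr, hl⟩

end Linked

end Linked

section Crossings

variable {adj : V → V → Prop} {good : V → Prop} {R A B : Set V}

theorem hasCrossing_iff_linked :
    HasCrossing adj good R A B ↔
      ∃ a ∈ A, ∃ b ∈ B, a ∈ R ∩ {v | good v} ∧ Linked adj (R ∩ {v | good v}) a b := by
  constructor
  · rintro ⟨k, f, hf, hadj, hA, hB⟩
    exact ⟨_, hA, _, hB, hf 0, reflTransGen_iff_exists_fin.2
      ⟨k, f, fun i => ⟨hadj i, hf _, hf _⟩, rfl, rfl⟩⟩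
  · rintro ⟨a, hA, b, hB, ha, hab⟩
    obtain ⟨k, f, hf, rfl, rfl⟩ := reflTransGen_iff_exists_fin.1 hab
    exact ⟨k, f, Fin.cases ha fun i => (hf i).2.2, fun i => (hf i).1, hA, hB⟩

theorem hasCrossing_comm [Std.Symm adj] :
    HasCrossing adj good R A B ↔ HasCrossing adj good R B A := by
  have hrev {A B : Set V} (h : HasCrossing adj good R A B) : HasCrossing adj good R B A := by
    rw [hasCrossing_iff_linked] at h ⊢
    obtain ⟨a, hA, b, hB, ha, hab⟩ := h
    exact ⟨b, hB, a, hA, hab.mem_right ha, hab.symm⟩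
  exact ⟨hrev, hrev⟩

theorem hasCrossing_comp_equiv (σ : Equiv.Perm V) (hσ : ∀ u v, adj (σ u) (σ v) ↔ adj u v) :
    HasCrossing adj (fun v => good (σ v)) (σ ⁻¹' R) (σ ⁻¹' A) (σ ⁻¹' B) ↔
      HasCrossing adj good R A B :=
  exists_congr fun _ => (Equiv.arrowCongr (.refl _) σ).exists_congr fun f =>
    and_congr .rfl (and_congr (forall_congr' fun i => (hσ (f i.castSucc) (f i.succ)).symm) .rfl)

theorem measurableSet_hasCrossing (adj : V → V → Prop) (R A B : Set V) :
    MeasurableSet {ξ : ColourCfg | HasCrossing adj (fun v => ξ v = true) R A B} := by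
  simp only [HasCrossing, measurableSet_setOfPred]
  fun_prop

end Crossings

/-! ### The game of Y -/

section GameOfY

instance : Std.Symm TriAdj where
  symm u v h := by
    simp only [TriAdj, Set.mem_insert_iff, Set.mem_singleton_iff, Prod.mk.injEq] at h ⊢
    omega

variable {t : ℤ} {N : ℕ} {S : Set V} {u v w : V} {i j k : Fin 3}

/-- The corners of the elementary triangle of `𝕋` based at `v`. -/
def corner (v : V) (i : Fin 3) : V := v + ![(1, 0), (0, -1), (0, 0)] i

theorem exists_ne_fin_three {P : Fin 3 → Fin 3 → Prop} :
    (∃ i j, i ≠ j ∧ P i j) ↔ P 0 1 ∨ P 0 2 ∨ P 1 0 ∨ P 1 2 ∨ P 2 0 ∨ P 2 1 := by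
  simp [Fin.exists_fin_succ, or_assoc]

theorem triAdj_iff_exists_corner_eq :
    TriAdj u v ↔ ∃ i j, i ≠ j ∧ corner u i = corner v j := by
  simp only [exists_ne_fin_three, TriAdj, corner, Prod.ext_iff, Set.mem_insert_iff,
    Set.mem_singleton_iff, Prod.fst_add, Prod.snd_add, Matrix.cons_val]
  omega

theorem corner_injective_left (i : Fin 3) : Function.Injective fun v => corner v i :=
  add_left_injective _

theorem corner_comm (v : V) (i j : Fin 3) : corner (corner v i) j = corner (corner v j) i :=
  add_right_comm _ _ _

theorem exists_corner_eq (v : V) (i : Fin 3) : ∃ w, corner w i = v :=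
  ⟨v - _, sub_add_cancel _ _⟩

theorem triAdj_corner_corner (v : V) (hij : i ≠ j) : TriAdj (corner v i) (corner v j) :=
  triAdj_iff_exists_corner_eq.2 ⟨j, i, hij.symm, corner_comm v i j⟩

theorem triAdj_corner_iff (k : Fin 3) : TriAdj (corner u k) (corner v k) ↔ TriAdj u v := by
  simp only [TriAdj, corner, Prod.fst_add, Prod.snd_add, add_sub_add_right_eq_sub]

/-- The barycentric coordinates of `v` in the triangle with sides `x = 0`, `y = t` and
`x - y + t = N`: the distances to these three sides, which add up to `N`. -/
def bary (t : ℤ) (N : ℕ) (v : V) : Fin 3 → ℤ := ![v.1, t - v.2, N + v.2 - v.1 - t]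

/-- The triangular board of side length `N` on which the game of Y is played. -/
def board (t : ℤ) (N : ℕ) : Set V := {v | ∀ i, 0 ≤ bary t N v i}

theorem mem_board_iff :
    v ∈ board t N ↔ 0 ≤ v.1 ∧ 0 ≤ t - v.2 ∧ 0 ≤ N + v.2 - v.1 - t :=
  Fin.forall_fin_succ.trans (and_congr .rfl Fin.forall_fin_two)

theorem sum_bary (t : ℤ) (N : ℕ) (v : V) : ∑ i, bary t N v i = N := by
  simp only [bary, Fin.sum_univ_three, Matrix.cons_val]
  ring

theorem bary_corner (t : ℤ) (N : ℕ) (v : V) (i j : Fin 3) :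
    bary t (N + 1) (corner v i) j = bary t N v j + if i = j then 1 else 0 := by
  fin_cases i <;> fin_cases j <;>
    simp only [bary, corner, Fin.zero_eta, Fin.mk_one, Fin.reduceFinMk, Fin.reduceEq, ↓reduceIte,
      Matrix.cons_val, Prod.fst_add, Prod.snd_add, Nat.cast_add_one] <;>
    ring

theorem corner_mem_board (hv : v ∈ board t N) (i : Fin 3) : corner v i ∈ board t (N + 1) := by
  intro j
  rw [bary_corner]
  have := hv j
  split_ifs <;> omega

theorem exists_corner_eq_of_triAdj (hu : u ∈ board t (N + 1)) (hv : v ∈ board t (N + 1))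
    (h : TriAdj u v) : ∃ w ∈ board t N, ∃ i j, i ≠ j ∧ corner w i = u ∧ corner w j = v := by
  obtain ⟨j, i, hij, hcorner⟩ := triAdj_iff_exists_corner_eq.1 h
  obtain ⟨w, rfl⟩ := exists_corner_eq u i
  obtain rfl : corner w j = v :=
    corner_injective_left i ((corner_comm w j i).trans hcorner)
  refine ⟨w, fun k => ?_, i, j, hij.symm, rfl, rfl⟩
  have hik := hu k
  have hjk := hv k
  rw [bary_corner] at hik hjk
  split_ifs at hik hjk <;> omega

/-- The winning condition of the game of Y: some component of `S` in the board touches all three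
sides. -/
def HasY (t : ℤ) (N : ℕ) (S : Set V) : Prop :=
  ∃ a ∈ board t N ∩ S, ∀ i, ∃ b, bary t N b i = 0 ∧ Linked TriAdj (board t N ∩ S) a b

/-- Schensted's reduction: each elementary triangle votes, and its base point takes the majority
colour of its corners. -/
def majority (S : Set V) : Set V := {v | ∃ i j, i ≠ j ∧ corner v i ∈ S ∧ corner v j ∈ S}

theorem majority_compl (S : Set V) : majority Sᶜ = (majority S)ᶜ := by
  ext v
  simp only [majority, Set.mem_ofPred_eq, Set.mem_compl_iff, exists_ne_fin_three]
  tauto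

theorem corner_mem_or_corner_mem (hv : v ∈ majority S) (hij : i ≠ j) :
    corner v i ∈ S ∨ corner v j ∈ S := by
  by_contra! h
  have : v ∈ majority Sᶜ := ⟨i, j, hij, h⟩
  rw [majority_compl] at this
  exact this hv

theorem exists_ne_corner_mem (hv : v ∈ majority S) (i : Fin 3) : ∃ j ≠ i, corner v j ∈ S := by
  obtain ⟨j, k, hjk, hj, hk⟩ := hv
  by_cases hji : j = i
  · exact ⟨k, hji ▸ hjk.symm, hk⟩
  · exact ⟨j, hji, hj⟩

theorem linked_corner_corner (hv : v ∈ board t N) (hi : corner v i ∈ S) (hj : corner v j ∈ S) :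
    Linked TriAdj (board t (N + 1) ∩ S) (corner v i) (corner v j) := by
  obtain rfl | hij := eq_or_ne i j
  · exact .refl
  · exact .of_adj (triAdj_corner_corner v hij) ⟨corner_mem_board hv i, hi⟩
      ⟨corner_mem_board hv j, hj⟩

theorem linked_corner_of_triAdj (huv : TriAdj u v) (hu : u ∈ board t N ∩ majority S)
    (hv : v ∈ board t N ∩ majority S) (hi : corner u i ∈ S) (hj : corner v j ∈ S) :
    Linked TriAdj (board t (N + 1) ∩ S) (corner u i) (corner v j) := by
  obtain ⟨i', j', -, hshared⟩ := triAdj_iff_exists_corner_eq.1 huv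
  by_cases hmem : corner u i' ∈ S
  · refine (linked_corner_corner hu.1 hi hmem).trans ?_
    rw [hshared] at hmem ⊢
    exact linked_corner_corner hv.1 hmem hj
  · obtain ⟨k, hki, hkj⟩ : ∃ k, k ≠ i' ∧ k ≠ j' :=
      Fin.exists_ne_and_ne_of_two_lt i' j' (by norm_num)
    have huk := (corner_mem_or_corner_mem hu.2 hki).resolve_right hmem
    have hvk := (corner_mem_or_corner_mem hv.2 hkj).resolve_right (hshared ▸ hmem)
    have hmid : Linked TriAdj (board t (N + 1) ∩ S) (corner u k) (corner v k) :=
      .of_adj ((triAdj_corner_iff k).2 huv) ⟨corner_mem_board hu.1 k, huk⟩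
        ⟨corner_mem_board hv.1 k, hvk⟩
    exact ((linked_corner_corner hu.1 hi huk).trans hmid).trans (linked_corner_corner hv.1 hvk hj)

theorem linked_corner_of_linked_majority (h : Linked TriAdj (board t N ∩ majority S) u v)
    (hu : u ∈ board t N ∩ majority S) (hi : corner u i ∈ S) (hj : corner v j ∈ S) :
    Linked TriAdj (board t (N + 1) ∩ S) (corner u i) (corner v j) := by
  induction h generalizing j with
  | refl => exact linked_corner_corner hu.1 hi hj
  | @tail w v _ hstep ih =>
    obtain ⟨hwv, hw, hv⟩ := hstep
    obtain ⟨k, -, -, hk, -⟩ := hw.2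
    exact (ih hk).trans (linked_corner_of_triAdj hwv hw hv hk hj)

theorem linked_majority_of_linked_corner (hu : u ∈ board t N ∩ majority S)
    (hv : v ∈ board t N ∩ majority S)
    (h : Linked TriAdj (board t (N + 1) ∩ S) (corner u i) (corner v j)) :
    Linked TriAdj (board t N ∩ majority S) u v := by
  have hshare {u v : V} {i j : Fin 3} (hu : u ∈ board t N ∩ majority S)
      (hv : v ∈ board t N ∩ majority S) (hij : corner u i = corner v j) :
      Linked TriAdj (board t N ∩ majority S) u v := by
    obtain rfl | hne := eq_or_ne i j
    · exact corner_injective_left i hij ▸ .refl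
    · exact .of_adj (triAdj_iff_exists_corner_eq.2 ⟨i, j, hne, hij⟩) hu hv
  generalize ha : corner u i = a at h
  induction h using Relation.ReflTransGen.head_induction_on generalizing u i with
  | refl => exact hshare hu hv ha
  | @head a b hstep _ ih =>
    obtain ⟨hab, ⟨haN, haS⟩, ⟨hbN, hbS⟩⟩ := hstep
    obtain ⟨w, hw, k, l, hkl, rfl, rfl⟩ := exists_corner_eq_of_triAdj haN hbN hab
    have hw : w ∈ board t N ∩ majority S := ⟨hw, k, l, hkl, haS, hbS⟩
    exact (hshare hu hw ha).trans (ih hw rfl)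

theorem exists_corner_eq_of_linked {a b : V} (h : Linked TriAdj (board t (N + 1) ∩ S) a b)
    (hab : a ≠ b) : ∃ w ∈ board t N ∩ majority S, ∃ i, corner w i = a := by
  obtain rfl | ⟨c, ⟨hac, ⟨haN, haS⟩, ⟨hcN, hcS⟩⟩, -⟩ := h.cases_head
  · exact absurd rfl hab
  · obtain ⟨w, hw, i, j, hij, rfl, rfl⟩ := exists_corner_eq_of_triAdj haN hcN hac
    exact ⟨w, ⟨hw, i, j, hij, haS, hcS⟩, i, rfl⟩

theorem hasY_succ_of_majority (h : HasY t N (majority S)) : HasY t (N + 1) S := by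
  obtain ⟨u, hu, hsides⟩ := h
  obtain ⟨k, -, -, hk, -⟩ := hu.2
  refine ⟨corner u k, ⟨corner_mem_board hu.1 k, hk⟩, fun i => ?_⟩
  obtain ⟨v, hvi, huv⟩ := hsides i
  have hv := huv.mem_right hu
  obtain ⟨j, hji, hj⟩ := exists_ne_corner_mem hv.2 i
  exact ⟨corner v j, by rw [bary_corner, hvi, if_neg hji, add_zero],
    linked_corner_of_linked_majority huv hu hk hj⟩

theorem hasY_majority_of_succ (h : HasY t (N + 1) S) : HasY t N (majority S) := by
  obtain ⟨a, ha, hsides⟩ := h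
  obtain ⟨b, hab, hlink⟩ : ∃ b, a ≠ b ∧ Linked TriAdj (board t (N + 1) ∩ S) a b := by
    by_contra! h
    have hzero (i : Fin 3) : bary t (N + 1) a i = 0 := by
      obtain ⟨b, hb, hlink⟩ := hsides i
      obtain rfl : a = b := by_contra fun hab => h b hab hlink
      exact hb
    have := sum_bary t (N + 1) a
    simp only [hzero, Finset.sum_const_zero] at this
    omega
  obtain ⟨u, hu, k, rfl⟩ := exists_corner_eq_of_linked hlink hab
  refine ⟨u, hu, fun i => ?_⟩
  obtain ⟨c, hci, hlink⟩ := hsides i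
  obtain ⟨v, hv, j, rfl⟩ : ∃ v ∈ board t N ∩ majority S, ∃ j, corner v j = c := by
    obtain rfl | hne := eq_or_ne (corner u k) c
    · exact ⟨u, hu, k, rfl⟩
    · exact exists_corner_eq_of_linked hlink.symm hne.symm
  refine ⟨v, ?_, linked_majority_of_linked_corner hu hv hlink⟩
  have hvi := hv.1 i
  rw [bary_corner] at hci
  split_ifs at hci <;> omega

theorem hasY_succ_iff : HasY t (N + 1) S ↔ HasY t N (majority S) :=
  ⟨hasY_majority_of_succ, hasY_succ_of_majority⟩

theorem hasY_zero_iff : HasY t 0 S ↔ (0, t) ∈ S := by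
  have hboard : board t 0 = {(0, t)} := by
    ext v
    simp only [mem_board_iff, Set.mem_singleton_iff, Prod.ext_iff]
    omega
  constructor
  · rintro ⟨a, ⟨ha, haS⟩, -⟩
    rw [hboard] at ha
    exact ha ▸ haS
  · refine fun h => ⟨(0, t), ⟨hboard ▸ rfl, h⟩, fun i => ⟨(0, t), ?_, .refl⟩⟩
    fin_cases i <;> simp [bary]

theorem hasY_compl_iff : HasY t N Sᶜ ↔ ¬ HasY t N S := by
  induction N generalizing S with
  | zero => rw [hasY_zero_iff, hasY_zero_iff, Set.mem_compl_iff]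
  | succ N ih => rw [hasY_succ_iff, hasY_succ_iff, majority_compl, ih]

end GameOfY

/-! ### The game of Hex -/

section Hex

variable {n m : ℕ} {good : V → Prop} {u v : V}

/-- The black vertices when the game of Hex on `S_{n,m}` is played on the board of Y of side length
`n + m + 1`: those coloured black in the rectangle, and all vertices below it. The vertices to the
right of the rectangle are white. -/
def hexBlack (n : ℕ) (good : V → Prop) : Set V := {v | v.2 < 0 ∨ v.1 ≤ n ∧ good v}

theorem mem_hexBoard_iff :
    v ∈ board m (n + m + 1) ↔ 0 ≤ v.1 ∧ v.2 ≤ m ∧ v.1 ≤ n + 1 + v.2 := by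
  rw [mem_board_iff]
  omega

theorem TriAdj.snd_le (h : TriAdj u v) : u.2 ≤ v.2 + 1 := by
  simp only [TriAdj, Set.mem_insert_iff, Set.mem_singleton_iff, Prod.mk.injEq] at h
  omega

theorem TriAdj.fst_le (h : TriAdj u v) : v.1 ≤ u.1 + 1 := by
  simp only [TriAdj, Set.mem_insert_iff, Set.mem_singleton_iff, Prod.mk.injEq] at h
  omega

theorem triAdj_add_one_fst (x y : ℤ) : TriAdj (x, y) (x + 1, y) := by simp [TriAdj]

theorem triAdj_add_one_snd (x y : ℤ) : TriAdj (x, y) (x, y + 1) := by simp [TriAdj]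

theorem hasCrossing_top_bot_of_hasY (h : HasY m (n + m + 1) (hexBlack n good)) :
    HasCrossing TriAdj good (Rect n m) (TopSide n m) (BotSide n m) := by
  obtain ⟨a, ha, hsides⟩ := h
  obtain ⟨b, hb, hab⟩ := hsides 1
  obtain ⟨c, hc, hac⟩ := hsides 2
  obtain ⟨hbN, hbS⟩ := hab.mem_right ha
  rw [mem_hexBoard_iff] at hbN
  replace hb : m - b.2 = 0 := hb
  replace hc : (n + m + 1 : ℕ) + c.2 - c.1 - m = 0 := hc
  have hbR : b ∈ Rect n m ∩ {v | good v} := by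
    obtain ⟨hbn, hgood⟩ := hbS.resolve_left (by omega)
    exact ⟨⟨hbN.1, hbn, by omega, hbN.2.1⟩, hgood⟩
  have hcR : c ∉ Rect n m ∩ {v | good v} := by
    rintro ⟨⟨-, _, _, -⟩, -⟩
    omega
  have hexit : ∀ u ∈ Rect n m ∩ {v | good v},
      ∀ v ∈ (board m (n + m + 1) ∩ hexBlack n good) \ (Rect n m ∩ {v | good v}),
      TriAdj u v → u ∈ BotSide n m := by
    rintro u ⟨hu, -⟩ v ⟨⟨hvN, hvS⟩, hvR⟩ huv
    rw [mem_hexBoard_iff] at hvN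
    have hv : v.2 < 0 := by
      by_contra hv
      obtain ⟨hvn, hgood⟩ := hvS.resolve_left hv
      exact hvR ⟨⟨hvN.1, hvn, not_lt.1 hv, hvN.2.1⟩, hgood⟩
    exact ⟨hu, le_antisymm (by have := huv.snd_le; omega) hu.2.2.1⟩
  obtain ⟨d, hd, hbd⟩ := (hab.symm.trans hac).exists_exit hexit hbR hcR
  exact hasCrossing_iff_linked.2 ⟨b, ⟨hbR.1, by omega⟩, d, hd, hbR, hbd⟩

theorem hasCrossing_left_right_of_hasY (h : HasY m (n + m + 1) (hexBlack n good)ᶜ) :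
    HasCrossing TriAdj (fun v => ¬ good v) (Rect n m) (LeftSide n m) (RightSide n m) := by
  have hwhite {v : V} : v ∈ (hexBlack n good)ᶜ ↔ 0 ≤ v.2 ∧ (v.1 ≤ n → ¬ good v) := by
    simp only [hexBlack, Set.mem_compl_iff, Set.mem_ofPred_eq, not_or, not_lt, not_and]
  obtain ⟨a, ha, hsides⟩ := h
  obtain ⟨b, hb, hab⟩ := hsides 0
  obtain ⟨c, hc, hac⟩ := hsides 2
  obtain ⟨hbN, hbS⟩ := hab.mem_right ha
  have hcS := (hac.mem_right ha).2
  rw [mem_hexBoard_iff] at hbN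
  rw [hwhite] at hbS hcS
  replace hb : b.1 = 0 := hb
  replace hc : (n + m + 1 : ℕ) + c.2 - c.1 - m = 0 := hc
  have hbR : b ∈ Rect n m ∩ {v | ¬ good v} :=
    ⟨⟨hbN.1, by omega, hbS.1, hbN.2.1⟩, hbS.2 (by omega)⟩
  have hcR : c ∉ Rect n m ∩ {v | ¬ good v} := by
    rintro ⟨⟨-, _, -, -⟩, -⟩
    omega
  have hexit : ∀ u ∈ Rect n m ∩ {v | ¬ good v},
      ∀ v ∈ (board m (n + m + 1) ∩ (hexBlack n good)ᶜ) \ (Rect n m ∩ {v | ¬ good v}),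
      TriAdj u v → u ∈ RightSide n m := by
    rintro u ⟨hu, -⟩ v ⟨⟨hvN, hvS⟩, hvR⟩ huv
    rw [mem_hexBoard_iff] at hvN
    rw [hwhite] at hvS
    have hv : n < v.1 := by
      by_contra! hv
      exact hvR ⟨⟨hvN.1, hv, hvS.1, hvN.2.1⟩, hvS.2 hv⟩
    exact ⟨hu, le_antisymm hu.2.1 (by have := huv.fst_le; omega)⟩
  obtain ⟨d, hd, hbd⟩ := (hab.symm.trans hac).exists_exit hexit hbR hcR
  exact hasCrossing_iff_linked.2 ⟨b, ⟨hbR.1, hb⟩, d, hd, hbR, hbd⟩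

theorem hasY_of_hasCrossing_top_bot
    (h : HasCrossing TriAdj good (Rect n m) (TopSide n m) (BotSide n m)) :
    HasY m (n + m + 1) (hexBlack n good) := by
  obtain ⟨a, ⟨-, ha⟩, b, ⟨hbR, hb⟩, haC, hab⟩ := hasCrossing_iff_linked.1 h
  have hrow {x : ℤ} (h0 : 0 ≤ x) (hn : x ≤ n) :
      ((x, -1) : V) ∈ board m (n + m + 1) ∩ hexBlack n good :=
    ⟨mem_hexBoard_iff.2 ⟨h0, by omega, by omega⟩, .inl (by simp)⟩
  have hsub : Rect n m ∩ {v | good v} ⊆ board m (n + m + 1) ∩ hexBlack n good :=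
    fun v ⟨⟨h0, hn, h0', hm⟩, hgood⟩ => ⟨mem_hexBoard_iff.2 (by omega), .inr ⟨hn, hgood⟩⟩
  have hbelow : Linked TriAdj (board m (n + m + 1) ∩ hexBlack n good) a (b.1, -1) := by
    have hadj : TriAdj b (b.1, -1) := by simp [TriAdj, hb]
    exact (hab.mono hsub).tail ⟨hadj, hsub (hab.mem_right haC), hrow hbR.1 hbR.2.1⟩
  have halong {x : ℤ} (h0 : 0 ≤ x) (hn : x ≤ n) :
      Linked TriAdj (board m (n + m + 1) ∩ hexBlack n good) a (x, -1) := by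
    refine hbelow.trans (.of_uIcc (f := fun x => (x, -1)) (fun x => triAdj_add_one_fst x (-1)) ?_)
    intro i hi
    have := hbR.1
    have := hbR.2.1
    rw [Set.mem_uIcc] at hi
    exact hrow (by omega) (by omega)
  refine ⟨a, hsub haC, Fin.forall_fin_succ.2 ⟨?_, Fin.forall_fin_two.2 ⟨?_, ?_⟩⟩⟩
  · exact ⟨(0, -1), rfl, halong le_rfl (by omega)⟩
  · exact ⟨a, by simp [bary, ha], .refl⟩
  · exact ⟨(n, -1), by simp [bary], halong (by omega) le_rfl⟩

theorem hasY_of_hasCrossing_left_right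
    (h : HasCrossing TriAdj (fun v => ¬ good v) (Rect n m) (LeftSide n m) (RightSide n m)) :
    HasY m (n + m + 1) (hexBlack n good)ᶜ := by
  obtain ⟨a, ⟨-, ha⟩, b, ⟨hbR, hb⟩, haC, hab⟩ := hasCrossing_iff_linked.1 h
  have hcolumn {y : ℤ} (h0 : 0 ≤ y) (hm : y ≤ m) :
      ((n + 1, y) : V) ∈ board m (n + m + 1) ∩ (hexBlack n good)ᶜ :=
    ⟨mem_hexBoard_iff.2 ⟨by omega, hm, by omega⟩, by simp [hexBlack, h0]⟩
  have hsub : Rect n m ∩ {v | ¬ good v} ⊆ board m (n + m + 1) ∩ (hexBlack n good)ᶜ :=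
    fun v ⟨⟨h0, hn, h0', hm⟩, hgood⟩ => ⟨mem_hexBoard_iff.2 (by omega),
      fun hv => hv.elim (not_lt.2 h0') fun hv => hgood hv.2⟩
  have hbeside : Linked TriAdj (board m (n + m + 1) ∩ (hexBlack n good)ᶜ) a (n + 1, b.2) := by
    have hadj : TriAdj b (n + 1, b.2) := by simp [TriAdj, hb]
    exact (hab.mono hsub).tail ⟨hadj, hsub (hab.mem_right haC), hcolumn hbR.2.2.1 hbR.2.2.2⟩
  have halong {y : ℤ} (h0 : 0 ≤ y) (hm : y ≤ m) :
      Linked TriAdj (board m (n + m + 1) ∩ (hexBlack n good)ᶜ) a (n + 1, y) := by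
    refine hbeside.trans (.of_uIcc (f := fun y => ((n : ℤ) + 1, y))
      (triAdj_add_one_snd (n + 1)) ?_)
    intro i hi
    have := hbR.2.2.1
    have := hbR.2.2.2
    rw [Set.mem_uIcc] at hi
    exact hcolumn (by omega) (by omega)
  refine ⟨a, hsub haC, Fin.forall_fin_succ.2 ⟨?_, Fin.forall_fin_two.2 ⟨?_, ?_⟩⟩⟩
  · exact ⟨a, ha, .refl⟩
  · exact ⟨(n + 1, m), by simp [bary], halong (by omega) le_rfl⟩
  · exact ⟨(n + 1, 0), by simp [bary], halong le_rfl (by omega)⟩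

theorem hasCrossing_top_bot_iff_not_left_right :
    HasCrossing TriAdj good (Rect n m) (TopSide n m) (BotSide n m) ↔
      ¬ HasCrossing TriAdj (fun v => ¬ good v) (Rect n m) (LeftSide n m) (RightSide n m) := by
  constructor
  · intro hvert hhoriz
    exact hasY_compl_iff.1 (hasY_of_hasCrossing_left_right hhoriz)
      (hasY_of_hasCrossing_top_bot hvert)
  · intro hhoriz
    by_contra hvert
    exact hhoriz (hasCrossing_left_right_of_hasY
      (hasY_compl_iff.2 (mt hasCrossing_top_bot_of_hasY hvert)))

theorem triAdj_swap_swap_iff : TriAdj u.swap v.swap ↔ TriAdj u v := by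
  simp only [TriAdj, Prod.fst_swap, Prod.snd_swap, Set.mem_insert_iff, Set.mem_singleton_iff,
    Prod.mk.injEq]
  omega

theorem swap_preimage_rect (n m : ℕ) : Prod.swap ⁻¹' Rect n m = Rect m n := by
  ext
  simp only [Rect, Set.mem_preimage, Set.mem_ofPred_eq, Prod.fst_swap, Prod.snd_swap]
  tauto

theorem swap_preimage_leftSide (n m : ℕ) : Prod.swap ⁻¹' LeftSide n m = BotSide m n := by
  rw [BotSide, ← swap_preimage_rect]
  rfl

theorem swap_preimage_rightSide (n m : ℕ) : Prod.swap ⁻¹' RightSide n m = TopSide m n := by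
  rw [TopSide, ← swap_preimage_rect]
  rfl

theorem not_swap_mem_vertBC_iff {n m : ℕ} {ξ : ColourCfg} :
    (fun v => !ξ v.swap) ∈ VertBC TriAdj m n ↔ ξ ∉ VertBC TriAdj n m := by
  have hreflect := hasCrossing_comp_equiv (adj := TriAdj) (good := fun v => ¬ ξ v = true)
    (R := Rect n m) (A := RightSide n m) (B := LeftSide n m) (Equiv.prodComm ℤ ℤ)
    fun _ _ => triAdj_swap_swap_iff
  rw [Equiv.coe_prodComm, swap_preimage_rect, swap_preimage_leftSide, swap_preimage_rightSide,
    hasCrossing_comm (A := RightSide n m)] at hreflect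
  have hduality := hasCrossing_top_bot_iff_not_left_right (n := n) (m := m)
    (good := fun v => ξ v = true)
  simp only [VertBC, Set.mem_ofPred_eq, Bool.not_eq_true', ← Bool.not_eq_true]
  rw [hreflect, hduality, not_not]

end Hex

/-! ### Rhombus crossings -/

theorem measure_eq_half_of_preimage_eq_compl {Ω : Type*} [MeasurableSpace Ω] {μ : Measure Ω}
    [IsProbabilityMeasure μ] {f : Ω → Ω} (hf : MeasurePreserving f μ μ) {A : Set Ω}
    (hA : MeasurableSet A) (hfA : f ⁻¹' A = Aᶜ) : μ A = 1 / 2 := by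
  have hcompl : μ Aᶜ = μ A := by rw [← hfA, hf.measure_preimage hA.nullMeasurableSet]
  have hsum := prob_add_prob_compl hA (μ := μ)
  rw [hcompl, ← mul_two] at hsum
  rw [one_div]
  exact ENNReal.eq_inv_of_mul_eq_one_left hsum

theorem measurePreserving_not_swap {adj : V → V → Prop} [Std.Symm adj]
    (hadj : ∀ u v, adj u.swap v.swap ↔ adj u v) (p : ℝ) :
    MeasurePreserving (fun (ξ : ColourCfg) v => !ξ v.swap) (colourMeasure adj p (1 / 2))
      (colourMeasure adj p (1 / 2)) := by
  have hhalf : (1 : ℝ) - 1 / 2 = 1 / 2 := by norm_num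
  have hswap : MeasurePreserving (fun (ξ : ColourCfg) v => ξ (Equiv.prodComm ℤ ℤ v))
      (colourMeasure adj p (1 / 2)) (colourMeasure adj p (1 / 2)) :=
    ⟨measurable_pi_comp _, colourMeasure_map_comp_equiv _ hadj⟩
  have hnot : MeasurePreserving (fun (ξ : ColourCfg) v => !ξ v)
      (colourMeasure adj p (1 / 2)) (colourMeasure adj p (1 / 2)) :=
    ⟨by fun_prop, by rw [colourMeasure_map_not, hhalf]⟩
  exact hnot.comp hswap

theorem tri_rhombus_crossing_general {adj : V → V → Prop} [Std.Symm adj]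
    (hadj : ∀ u v, adj u.swap v.swap ↔ adj u v) (p : ℝ) (n : ℕ) :
    DaCMeasure adj p (1 / 2) (colourEvent (VertBC TriAdj n n)) = 1 / 2 := by
  have hmeas : MeasurableSet (VertBC TriAdj n n) := measurableSet_hasCrossing _ _ _ _
  rw [DaCMeasure_colourEvent hmeas]
  exact measure_eq_half_of_preimage_eq_compl (measurePreserving_not_swap hadj p) hmeas
    (Set.ext fun _ => not_swap_mem_vertBC_iff)

/-- **Rhombus crossings at `r = 1/2` on the triangular lattice (Lemma 5.1).**
For any `p ∈ [0,1]` and `n ∈ ℕ`, the probability of a black vertical crossing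
of the rhombus `S_{n,n}` is exactly `1/2`. -/
theorem tri_rhombus_crossing (p : ℝ) (hp0 : 0 ≤ p) (hp1 : p ≤ 1) (n : ℕ) :
    DaCMeasure TriAdj p (1 / 2) (colourEvent (VertBC TriAdj n n)) = 1 / 2 :=
  tri_rhombus_crossing_general (fun _ _ => triAdj_swap_swap_iff) p n

end DaC
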